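/- Let k ≥ 1, let X be a compact topological space equipped with a nonzero finite Borel measure μ, and let g : ℝᵏ → ℝᵏ be continuous and bounded such that there exists ρ > 0 with g(w) ≠ 0 whenever ‖w‖ ≥ ρ, and such that there exists a continuous map φ : S^{k-1} → S^{k-1} with g(rz)/‖g(rz)‖ → φ(z) as r → ∞, uniformly for z ∈ S^{k-1}. Let C > 0, let u_n : X → ℝᵏ be a sequence of continuous functions with averages ū_n := (1/μ(X)) ∫_X u_n dμ satisfying sup_{x ∈ X} ‖u_n(x) − ū_n‖ ≤ C for all n, ‖ū_n‖ → ∞, and ū_n/‖ū_n‖ → z for some z ∈ S^{k-1}. Then there exists n₀ such that for all n ≥ n₀, ⟨∫_X g(u_n(x)) dμ(x), φ(z)⟩ ≥ (1/4) ∫_X ‖g(u_n(x))‖ dμ(x) > 0; in particular ∫_X g(u_n(x)) dμ(x) ≠ 0 for all n ≥ n₀. -/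

import Mathlib

open MeasureTheory Filter
open scoped RealInnerProductSpace

/-!
Points `u n x` stay within `C` of centers `ū n` that escape to infinity, so `u n x` and `ū n` are
asymptotically equivalent and have the same limiting direction `z`, uniformly in `x`. Hence the
direction of `g (u n x)` tends to the unit vector `φ z`, uniformly in `x`, so that for every `c < 1`
eventually `c * ‖g (u n x)‖ ≤ ⟪g (u n x), φ z⟫`. Integrating over `x` gives the claim.
-/

open Asymptotics Metric NormedSpace Topology

section Direction

variable {α E F : Type*} {l : Filter α} {v w : α → E}
  [NormedAddCommGroup E] [NormedAddCommGroup F]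

theorem isEquivalent_of_norm_sub_le {C : ℝ} (hwv : ∀ᶠ p in l, ‖w p - v p‖ ≤ C)
    (hv : Tendsto (fun p => ‖v p‖) l atTop) : w ~[l] v :=
  (IsBigO.of_bound C (g := fun _ => (1 : ℝ)) (by simpa using hwv)).trans_isLittleO
    ((isLittleO_one_left_iff ℝ).mpr hv)

theorem tendsto_norm_atTop_of_isEquivalent (hwv : w ~[l] v)
    (hv : Tendsto (fun p => ‖v p‖) l atTop) : Tendsto (fun p => ‖w p‖) l atTop :=
  (isLittleO_one_left_iff ℝ).mp <|
    ((isLittleO_one_left_iff ℝ).mpr hv).trans_isBigO hwv.isBigO_symm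

variable [NormedSpace ℝ E] [NormedSpace ℝ F]

theorem norm_normalize_le_one (x : E) : ‖normalize x‖ ≤ 1 := by
  rcases eq_or_ne x 0 with rfl | hx
  · simp
  · exact (norm_normalize hx).le

theorem norm_mul_norm_normalize_sub_le (x y : E) :
    ‖y‖ * ‖normalize x - normalize y‖ ≤ 2 * ‖x - y‖ := by
  have decomposition : ‖y‖ • (normalize x - normalize y)
      = (‖y‖ - ‖x‖) • normalize x + (x - y) := by
    rw [smul_sub, sub_smul, norm_smul_normalize, norm_smul_normalize, sub_add_sub_cancel]
  calc ‖y‖ * ‖normalize x - normalize y‖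
      = ‖(‖y‖ - ‖x‖) • normalize x + (x - y)‖ := by
        rw [← decomposition, norm_smul, norm_norm]
    _ ≤ |‖y‖ - ‖x‖| * ‖normalize x‖ + ‖x - y‖ := by
        simpa only [norm_smul, Real.norm_eq_abs] using
          norm_add_le ((‖y‖ - ‖x‖) • normalize x) (x - y)
    _ ≤ ‖x - y‖ * 1 + ‖x - y‖ := by
        gcongr
        · exact norm_sub_rev x y ▸ abs_norm_sub_norm_le y x
        · exact norm_normalize_le_one x
    _ = 2 * ‖x - y‖ := by ring

theorem tendsto_normalize_sub_of_isEquivalent (hwv : w ~[l] v) :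
    Tendsto (fun p => normalize (w p) - normalize (v p)) l (𝓝 0) := by
  have ratio : Tendsto (fun p => 2 * (‖w p - v p‖ / ‖v p‖)) l (𝓝 0) := by
    simpa using (isLittleO_norm_norm.mpr hwv.isLittleO).tendsto_div_nhds_zero.const_mul 2
  refine squeeze_zero_norm' ?_ ratio
  filter_upwards [hwv.isLittleO.bound one_pos] with p hp
  rcases eq_or_ne (v p) 0 with hv | hv
  · have hw : w p = 0 := by simpa [hv] using hp
    simp [hv, hw]
  · rw [← mul_div_assoc, le_div_iff₀' (norm_pos_iff.mpr hv)]
    exact norm_mul_norm_normalize_sub_le _ _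

theorem tendsto_normalize_of_isEquivalent {z : E} (hwv : w ~[l] v)
    (hv : Tendsto (fun p => normalize (v p)) l (𝓝 z)) :
    Tendsto (fun p => normalize (w p)) l (𝓝 z) := by
  simpa using (tendsto_normalize_sub_of_isEquivalent hwv).add hv

/-- The map `g` has asymptotic direction `φ` at infinity: the direction of `g (r • y)` tends to
`φ y` as `r → ∞`, uniformly for `y` in the unit sphere. Directions are taken with
`NormedSpace.normalize`, so that zeros of `g` have direction `0`; only the values of `φ` on the
unit sphere matter. -/
def HasAsymptoticDirection (g φ : E → F) : Prop :=
  TendstoUniformlyOn (fun (r : ℝ) y => normalize (g (r • y))) φ atTop (sphere 0 1)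

theorem hasAsymptoticDirection_iff {g φ : E → F} :
    HasAsymptoticDirection g φ ↔ ∀ ε > (0 : ℝ), ∃ r₀ : ℝ, ∀ r : ℝ, r₀ ≤ r →
      ∀ y : E, ‖y‖ = 1 → ‖normalize (g (r • y)) - φ y‖ ≤ ε := by
  simp only [HasAsymptoticDirection, uniformity_basis_dist_le.tendstoUniformlyOn_iff_of_uniformity,
    eventually_atTop, Set.mem_ofPred_eq, mem_sphere_zero_iff_norm, dist_eq_norm, norm_sub_rev,
    gt_iff_lt]

theorem HasAsymptoticDirection.tendsto_normalize_comp {g φ : E → F} {z : E}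
    (hg : HasAsymptoticDirection g φ) (hφ : ContinuousWithinAt φ (sphere 0 1) z)
    (hw : Tendsto (fun p => ‖w p‖) l atTop)
    (hz : Tendsto (fun p => normalize (w p)) l (𝓝 z)) :
    Tendsto (fun p => normalize (g (w p))) l (𝓝 (φ z)) := by
  have uniform : TendstoUniformlyOn (fun p y => normalize (g (‖w p‖ • y))) φ l (sphere 0 1) :=
    fun s hs => hw.eventually (hg s hs)
  have on_sphere : ∀ᶠ p in l, normalize (w p) ∈ sphere (0 : E) 1 := by
    filter_upwards [hw.eventually_gt_atTop 0] with p hp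
    exact mem_sphere_zero_iff_norm.mpr (norm_normalize (norm_pos_iff.mp hp))
  simpa only [norm_smul_normalize] using
    uniform.tendsto_comp hφ (tendsto_nhdsWithin_iff.mpr ⟨hz, on_sphere⟩)

end Direction

section Integral

variable {α X F : Type*} [NormedAddCommGroup F] [InnerProductSpace ℝ F]

theorem eventually_mul_norm_le_inner {l : Filter α} {h : α → F} {e : F} {c : ℝ}
    (he : ‖e‖ = 1) (hc : c < 1) (hh : Tendsto (fun p => normalize (h p)) l (𝓝 e)) :
    ∀ᶠ p in l, c * ‖h p‖ ≤ ⟪h p, e⟫ := by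
  have cosine : Tendsto (fun p => ⟪normalize (h p), e⟫) l (𝓝 1) := by
    simpa [real_inner_self_eq_norm_sq, he] using hh.inner (𝕜 := ℝ) (tendsto_const_nhds (x := e))
  filter_upwards [cosine.eventually_const_le hc] with p hp
  calc c * ‖h p‖ ≤ ‖h p‖ * ⟪normalize (h p), e⟫ := by
        rw [mul_comm]
        gcongr
    _ = ⟪h p, e⟫ := by rw [← real_inner_smul_left, norm_smul_normalize]

variable [MeasurableSpace X] {μ : Measure X} {h : X → F}

theorem mul_integral_norm_le_inner_integral [CompleteSpace F] {e : F} {c : ℝ}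
    (hint : Integrable h μ) (hle : ∀ᵐ x ∂μ, c * ‖h x‖ ≤ ⟪h x, e⟫) :
    c * ∫ x, ‖h x‖ ∂μ ≤ ⟪∫ x, h x ∂μ, e⟫ := by
  calc c * ∫ x, ‖h x‖ ∂μ = ∫ x, c * ‖h x‖ ∂μ := (integral_const_mul _ _).symm
    _ ≤ ∫ x, ⟪h x, e⟫ ∂μ :=
        integral_mono_ae (hint.norm.const_mul c) (hint.inner_const e) hle
    _ = ⟪∫ x, h x ∂μ, e⟫ := by
        simp only [real_inner_comm e]
        exact integral_inner hint e

end Integral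

theorem integral_norm_pos_of_ae_ne_zero {X F : Type*} [MeasurableSpace X] {μ : Measure X}
    [NormedAddCommGroup F] {h : X → F} (hμ : μ ≠ 0) (hint : Integrable h μ)
    (hne : ∀ᵐ x ∂μ, h x ≠ 0) : 0 < ∫ x, ‖h x‖ ∂μ := by
  refine (integral_nonneg fun x => norm_nonneg (h x)).lt_of_ne' fun hzero => hμ ?_
  rw [integral_eq_zero_iff_of_nonneg (fun x => norm_nonneg (h x)) hint.norm] at hzero
  refine ae_eq_bot.mp (eventually_false_iff_eq_bot.mp ?_)
  filter_upwards [hzero, hne] with x hx hx'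
  exact hx' (norm_eq_zero.mp hx)

section General

variable {ι X E F : Type*} [MeasurableSpace X] {μ : Measure X} {l : Filter ι}
  [NormedAddCommGroup E] [NormedSpace ℝ E]
  {φ : E → F} {u : ι → X → E} {a : ι → E} {z : E} {C : ℝ}

/-- Limits along `l.curry (ae μ)` are limits along `l`, uniform in `x` up to a null set that may
depend on the index. -/
theorem HasAsymptoticDirection.tendsto_normalize_curry [NormedAddCommGroup F] [NormedSpace ℝ F]
    {g : E → F} (hg : HasAsymptoticDirection g φ) (hφ : ContinuousWithinAt φ (sphere 0 1) z)
    (hu : ∀ i, ∀ᵐ x ∂μ, ‖u i x - a i‖ ≤ C) (ha : Tendsto (fun i => ‖a i‖) l atTop)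
    (hz : Tendsto (fun i => normalize (a i)) l (𝓝 z)) :
    Tendsto (fun p : ι × X => normalize (g (u p.1 p.2))) (l.curry (ae μ)) (𝓝 (φ z)) := by
  have hfst : Tendsto Prod.fst (l.curry (ae μ)) l := tendsto_fst.mono_left curry_le_prod
  have equiv : (fun p : ι × X => u p.1 p.2) ~[l.curry (ae μ)] fun p => a p.1 :=
    isEquivalent_of_norm_sub_le (eventually_curry_iff.mpr (.of_forall hu)) (ha.comp hfst)
  exact hg.tendsto_normalize_comp hφ (tendsto_norm_atTop_of_isEquivalent equiv (ha.comp hfst))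
    (tendsto_normalize_of_isEquivalent equiv (hz.comp hfst))

theorem stmt_7_general [NormedAddCommGroup F] [InnerProductSpace ℝ F] [CompleteSpace F]
    (hμ : μ ≠ 0) {g : E → F} (hg : HasAsymptoticDirection g φ)
    (hφ : ContinuousWithinAt φ (sphere 0 1) z) (hφz : ‖φ z‖ = 1)
    (hint : ∀ i, Integrable (fun x => g (u i x)) μ)
    (hu : ∀ i, ∀ᵐ x ∂μ, ‖u i x - a i‖ ≤ C) (ha : Tendsto (fun i => ‖a i‖) l atTop)
    (hz : Tendsto (fun i => normalize (a i)) l (𝓝 z)) {c : ℝ} (hc₀ : 0 < c) (hc₁ : c < 1) :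
    ∀ᶠ i in l, c * (∫ x, ‖g (u i x)‖ ∂μ) ≤ ⟪∫ x, g (u i x) ∂μ, φ z⟫ ∧
      0 < ∫ x, ‖g (u i x)‖ ∂μ ∧ (∫ x, g (u i x) ∂μ) ≠ 0 := by
  have direction := hg.tendsto_normalize_curry hφ hu ha hz
  have hφz_ne : φ z ≠ 0 := norm_ne_zero_iff.mp (hφz ▸ one_ne_zero)
  filter_upwards [eventually_curry_iff.mp (eventually_mul_norm_le_inner hφz hc₁ direction),
    eventually_curry_iff.mp (direction.eventually_ne hφz_ne)] with i hle hne
  have lower := mul_integral_norm_le_inner_integral (hint i) hle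
  have pos : 0 < ∫ x, ‖g (u i x)‖ ∂μ :=
    integral_norm_pos_of_ae_ne_zero hμ (hint i) (hne.mono fun x => mt (normalize_eq_zero_iff _).mpr)
  refine ⟨lower, pos, fun hzero => ?_⟩
  rw [hzero, inner_zero_left] at lower
  exact lower.not_gt (mul_pos hc₀ pos)

end General

/-- The quantitative conclusion established in the proof of Lemma 1 of the paper: along any
sequence of continuous functions `u n` with uniformly bounded oscillation around their
averages `ū n`, with `‖ū n‖ → ∞` and `ū n / ‖ū n‖ → z`, eventually
`⟨∫ g (u n x) dμ, φ z⟩ ≥ (1/4) ∫ ‖g (u n x)‖ dμ > 0`, so in particular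
`∫ g (u n x) dμ ≠ 0`. -/
theorem stmt_7 (k : ℕ) (hk : 1 ≤ k)
    (X : Type*) [TopologicalSpace X] [CompactSpace X]
    [MeasurableSpace X] [BorelSpace X]
    (μ : Measure X) [IsFiniteMeasure μ] (hμ : μ ≠ 0)
    (g : EuclideanSpace ℝ (Fin k) → EuclideanSpace ℝ (Fin k))
    (hg_cont : Continuous g)
    (M : ℝ) (hg_bdd : ∀ w, ‖g w‖ ≤ M)
    (ρ : ℝ) (hρ : 0 < ρ)
    (hg_ne : ∀ w : EuclideanSpace ℝ (Fin k), ρ ≤ ‖w‖ → g w ≠ 0)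
    (φ : EuclideanSpace ℝ (Fin k) → EuclideanSpace ℝ (Fin k))
    (hφ_cont : ContinuousOn φ {z : EuclideanSpace ℝ (Fin k) | ‖z‖ = 1})
    (hφ_sphere : ∀ z : EuclideanSpace ℝ (Fin k), ‖z‖ = 1 → ‖φ z‖ = 1)
    (hφ : ∀ ε > (0 : ℝ), ∃ r₀ : ℝ, ρ ≤ r₀ ∧ ∀ r : ℝ, r₀ ≤ r →
      ∀ z : EuclideanSpace ℝ (Fin k), ‖z‖ = 1 →
        ‖‖g (r • z)‖⁻¹ • g (r • z) - φ z‖ ≤ ε)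
    (C : ℝ) (hC : 0 < C)
    (u : ℕ → X → EuclideanSpace ℝ (Fin k))
    (hu_cont : ∀ n : ℕ, Continuous (u n))
    (ubar : ℕ → EuclideanSpace ℝ (Fin k))
    (hubar : ∀ n : ℕ, ubar n = (μ Set.univ).toReal⁻¹ • ∫ x, u n x ∂μ)
    (hbd : ∀ n : ℕ, ∀ x : X, ‖u n x - ubar n‖ ≤ C)
    (hnorm : Tendsto (fun n => ‖ubar n‖) atTop atTop)
    (z : EuclideanSpace ℝ (Fin k)) (hz : ‖z‖ = 1)
    (hdir : Tendsto (fun n => ‖ubar n‖⁻¹ • ubar n) atTop (nhds z)) :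
    ∃ n₀ : ℕ, ∀ n ≥ n₀,
      (1 / 4 : ℝ) * (∫ x, ‖g (u n x)‖ ∂μ) ≤ ⟪∫ x, g (u n x) ∂μ, φ z⟫ ∧
      0 < ∫ x, ‖g (u n x)‖ ∂μ ∧ (∫ x, g (u n x) ∂μ) ≠ 0 := by
  have hg : HasAsymptoticDirection g φ :=
    hasAsymptoticDirection_iff.mpr fun ε hε => (hφ ε hε).imp fun _ => And.right
  have hint (n : ℕ) : Integrable (fun x => g (u n x)) μ :=
    .of_bound (hg_cont.comp (hu_cont n)).measurable.aestronglyMeasurable M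
      (.of_forall fun x => hg_bdd (u n x))
  have hφz : ContinuousWithinAt φ (sphere 0 1) z :=
    (hφ_cont z hz).mono fun _ => mem_sphere_zero_iff_norm.mp
  exact eventually_atTop.mp <| stmt_7_general hμ hg hφz (hφ_sphere z hz) hint
    (fun n => .of_forall (hbd n)) hnorm hdir (by norm_num) (by norm_num)
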